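/- Let N be a natural number, let a_1, ..., a_N be distinct positive real numbers, and let A_1, ..., A_N be positive real numbers. Then every eigenvalue of the weighted Cauchy matrix C_{a,A} is simple; equivalently, C_{a,A} has N distinct (positive) eigenvalues, i.e., each eigenspace of C_{a,A} is one-dimensional. -/

import Mathlib

/-!
Write `C` for the weighted Cauchy matrix, `D = diag(a)` and `v = (√A_1, ..., √A_N)`. The proof rests
on the Sylvester equation `D C + C D = v vᵀ`.

If `C x = μ x` and `vᵀ x = 0`, then the Sylvester equation gives `C (D x) = -μ (D x)`. For `μ ≠ 0`
the vectors `x` and `D x` are then eigenvectors of a Hermitian matrix for the distinct values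
`μ` and `-μ`, hence orthogonal: `x* D x = 0`, and `x = 0` since `D` is positive definite. So the
functional `x ↦ vᵀ x` is injective on the eigenspace, whose dimension is therefore at most one.

The value `μ = 0` is not an eigenvalue. If `C x = 0`, pairing the Sylvester equation applied to `x`
with `x` gives `|vᵀ x|² = 0`, hence `C (D x) = 0`. So the kernel of `C` is `D`-invariant and
contained in the kernel of `vᵀ`; thus `∑ √A_k x_k a_k ^ n = 0` for all `n`, and `x = 0` because the
Vandermonde matrix of the distinct `a_k` is invertible.
-/

open Matrix MeasureTheory
open scoped ComplexOrder

/-- The weighted Cauchy matrix `C_{a,A} = (√(A_j A_k)/(a_j + a_k))_{j,k}`, as a complex matrix. -/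
noncomputable def cauchyMatrix {N : ℕ} (a A : Fin N → ℝ) : Matrix (Fin N) (Fin N) ℂ :=
  Matrix.of fun j k => ((Real.sqrt (A j * A k) / (a j + a k) : ℝ) : ℂ)

/-- The vector `v_A = (√A_1, ..., √A_N)` in `ℂ^N`. -/
noncomputable def vecA {N : ℕ} (A : Fin N → ℝ) : Fin N → ℂ :=
  fun k => ((Real.sqrt (A k) : ℝ) : ℂ)

/-- The Sylvester equation `D C + C D = v vᵀ`, applied to a vector `x`; here `D x` is written as
the pointwise product `fun k => a k * x k`. -/
lemma cauchyMatrix_sylvester {N : ℕ} (a A : Fin N → ℝ) (ha0 : ∀ k, 0 < a k) (hA : ∀ k, 0 < A k)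
    (x : Fin N → ℂ) (j : Fin N) :
    (a j : ℂ) * (cauchyMatrix a A *ᵥ x) j + (cauchyMatrix a A *ᵥ fun k => (a k : ℂ) * x k) j
      = (vecA A ⬝ᵥ x) * vecA A j := by
  simp only [mulVec, dotProduct, cauchyMatrix, vecA, Matrix.of_apply]
  rw [Finset.mul_sum, ← Finset.sum_add_distrib, Finset.sum_mul]
  refine Finset.sum_congr rfl fun k _ => ?_
  rw [Real.sqrt_mul (hA j).le]
  have h : ((a j : ℂ) + a k) ≠ 0 := by
    exact_mod_cast (add_pos (ha0 j) (ha0 k)).ne'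
  push_cast
  field_simp

lemma cauchyMatrix_transpose {N : ℕ} (a A : Fin N → ℝ) :
    (cauchyMatrix a A)ᵀ = cauchyMatrix a A := by
  ext j k
  simp [cauchyMatrix, mul_comm, add_comm]

lemma cauchyMatrix_mulVec_star {N : ℕ} (a A : Fin N → ℝ) (x : Fin N → ℂ) :
    cauchyMatrix a A *ᵥ star x = star (cauchyMatrix a A *ᵥ x) := by
  ext j
  simp [mulVec, dotProduct, cauchyMatrix]

/-- `C` is self-adjoint for the sesquilinear pairing `(x, y) ↦ x* y`. -/
lemma cauchyMatrix_adjoint {N : ℕ} (a A : Fin N → ℝ) (x y : Fin N → ℂ) :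
    star x ⬝ᵥ (cauchyMatrix a A *ᵥ y) = star (cauchyMatrix a A *ᵥ x) ⬝ᵥ y := by
  rw [dotProduct_mulVec, ← mulVec_transpose, cauchyMatrix_transpose, cauchyMatrix_mulVec_star]

lemma vecA_star {N : ℕ} (A : Fin N → ℝ) : star (vecA A) = vecA A := by
  ext j
  simp [vecA]

/-- A kernel vector of `C` is annihilated by `vᵀ`, since `|vᵀ x|² = x* (D C + C D) x = 0`. -/
lemma vecA_dotProduct_eq_zero_of_ker {N : ℕ} (a A : Fin N → ℝ) (ha0 : ∀ k, 0 < a k)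
    (hA : ∀ k, 0 < A k) (x : Fin N → ℂ) (hx : cauchyMatrix a A *ᵥ x = 0) :
    vecA A ⬝ᵥ x = 0 := by
  have h : (cauchyMatrix a A *ᵥ fun k => (a k : ℂ) * x k) = (vecA A ⬝ᵥ x) • vecA A := by
    ext j
    simpa [hx] using cauchyMatrix_sylvester a A ha0 hA x j
  have h2 := cauchyMatrix_adjoint a A x (fun k => (a k : ℂ) * x k)
  rw [h, hx, dotProduct_smul] at h2
  have h3 : star x ⬝ᵥ vecA A = star (vecA A ⬝ᵥ x) := by
    rw [star_dotProduct, vecA_star]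
  rw [h3] at h2
  simpa using h2

lemma cauchyMatrix_ker_invariant {N : ℕ} (a A : Fin N → ℝ) (ha0 : ∀ k, 0 < a k)
    (hA : ∀ k, 0 < A k) (x : Fin N → ℂ) (hx : cauchyMatrix a A *ᵥ x = 0) :
    (cauchyMatrix a A *ᵥ fun k => (a k : ℂ) * x k) = 0 := by
  ext j
  simpa [hx, vecA_dotProduct_eq_zero_of_ker a A ha0 hA x hx] using
    cauchyMatrix_sylvester a A ha0 hA x j

lemma cauchyMatrix_ker_trivial {N : ℕ} (a A : Fin N → ℝ) (ha : Function.Injective a)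
    (ha0 : ∀ k, 0 < a k) (hA : ∀ k, 0 < A k) (x : Fin N → ℂ)
    (hx : cauchyMatrix a A *ᵥ x = 0) : x = 0 := by
  have hpow : ∀ n : ℕ, (cauchyMatrix a A *ᵥ fun k => (a k : ℂ) ^ n * x k) = 0 := by
    intro n
    induction n with
    | zero => simpa using hx
    | succ n ih =>
      have := cauchyMatrix_ker_invariant a A ha0 hA _ ih
      simpa only [pow_succ', mul_assoc] using this
  have hinj : Function.Injective fun k => (a k : ℂ) := Complex.ofReal_injective.comp ha
  have h0 : (fun k => vecA A k * x k) = 0 := by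
    refine eq_zero_of_forall_pow_sum_mul_pow_eq_zero hinj fun n => ?_
    rw [← vecA_dotProduct_eq_zero_of_ker a A ha0 hA _ (hpow n)]
    exact Finset.sum_congr rfl fun k _ => by ring
  ext k
  have hv : vecA A k ≠ 0 := by
    simpa [vecA] using (Real.sqrt_pos.2 (hA k)).ne'
  exact (mul_eq_zero.1 (congrFun h0 k)).resolve_left hv

/-- The functional `vᵀ` is injective on each eigenspace: if `vᵀ x = 0`, then `D x` satisfies the
eigenvalue equation for `-μ`, so it is orthogonal to `x`. -/
lemma eq_zero_of_eigen_of_vecA_dotProduct {N : ℕ} (a A : Fin N → ℝ) (ha : Function.Injective a)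
    (ha0 : ∀ k, 0 < a k) (hA : ∀ k, 0 < A k) (μ : ℂ) (x : Fin N → ℂ)
    (hx : cauchyMatrix a A *ᵥ x = μ • x) (hv : vecA A ⬝ᵥ x = 0) : x = 0 := by
  by_contra hne
  have hμ : μ ≠ 0 := by
    rintro rfl
    exact hne (cauchyMatrix_ker_trivial a A ha ha0 hA x (by simpa using hx))
  have hreal : star μ = μ := by
    have h := cauchyMatrix_adjoint a A x x
    rw [hx, dotProduct_smul, star_smul, smul_dotProduct] at h
    exact (mul_right_cancel₀ (by simpa using hne) h).symm
  have hy : (cauchyMatrix a A *ᵥ fun k => (a k : ℂ) * x k)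
      = (-μ) • fun k => (a k : ℂ) * x k := by
    ext j
    have h := cauchyMatrix_sylvester a A ha0 hA x j
    rw [hv, hx] at h
    simp only [Pi.smul_apply, smul_eq_mul, zero_mul] at h ⊢
    linear_combination h
  have horth : star x ⬝ᵥ (fun k => (a k : ℂ) * x k) = 0 := by
    have h := cauchyMatrix_adjoint a A x (fun k => (a k : ℂ) * x k)
    rw [hx, hy, dotProduct_smul, star_smul, smul_dotProduct, hreal, smul_eq_mul,
      smul_eq_mul] at h
    have h2 : (2 * μ) * (star x ⬝ᵥ fun k => (a k : ℂ) * x k) = 0 := by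
      linear_combination -h
    exact (mul_eq_zero.1 h2).resolve_left (by simpa using hμ)
  have hsum : ∑ k, a k * Complex.normSq (x k) = 0 := by
    have h : ((∑ k, a k * Complex.normSq (x k) : ℝ) : ℂ) = 0 := by
      rw [← horth]
      push_cast
      refine Finset.sum_congr rfl fun k _ => ?_
      rw [Complex.normSq_eq_conj_mul_self]
      simp only [Pi.star_apply, RCLike.star_def]
      ring
    exact_mod_cast h
  rw [Finset.sum_eq_zero_iff_of_nonneg
    fun k _ => mul_nonneg (ha0 k).le (Complex.normSq_nonneg _)] at hsum
  refine hne (funext fun k => ?_)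
  have hak : a k ≠ 0 := (ha0 k).ne'
  have hk := (mul_eq_zero.1 (hsum k (Finset.mem_univ k))).resolve_left hak
  exact Complex.normSq_eq_zero.1 hk

/-- Every eigenvalue of the weighted Cauchy matrix is simple: each eigenspace
of `C_{a,A}` (for an actual eigenvalue) is one-dimensional. -/
theorem cauchyMatrix_eigenvalues_simple (N : ℕ) (a A : Fin N → ℝ)
    (ha : Function.Injective a) (ha0 : ∀ k, 0 < a k) (hA : ∀ k, 0 < A k) :
    ∀ μ : ℂ, Module.End.HasEigenvalue (Matrix.toLin' (cauchyMatrix a A)) μ →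
      Module.finrank ℂ ↥(Module.End.eigenspace (Matrix.toLin' (cauchyMatrix a A)) μ) = 1 := by
  intro μ hμ
  set E := Module.End.eigenspace (Matrix.toLin' (cauchyMatrix a A)) μ with hE
  apply le_antisymm
  · have hinj : Function.Injective ((dotProductBilin ℂ ℂ (vecA A)).comp E.subtype) := by
      rw [injective_iff_map_eq_zero]
      rintro ⟨x, hx⟩ h0
      have hx' : cauchyMatrix a A *ᵥ x = μ • x := by
        simpa using Module.End.mem_eigenspace_iff.1 hx
      exact Subtype.ext
        (eq_zero_of_eigen_of_vecA_dotProduct a A ha ha0 hA μ x hx' (by simpa using h0))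
    simpa using LinearMap.finrank_le_finrank_of_injective hinj
  · have : Nontrivial E := Submodule.nontrivial_iff_ne_bot.2 hμ
    exact Module.finrank_pos
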